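/- Conversely, if φ : I → ℝ is a smooth function on an open interval with φ' nowhere zero and 2·φ'''·φ' − 3·(φ'')² = 0 on I, then locally φ is a Möbius transformation, i.e., φ(t) = (a·t + c)/(b·t + d) for some a, b, c, d with a·d − b·c ≠ 0. -/

import Mathlib

/-- A real function with vanishing derivative on an open interval is constant there. -/
theorem eq_of_hasDerivAt_zero_Ioo {p q : ℝ} {f : ℝ → ℝ}
    (hf : ∀ t ∈ Set.Ioo p q, HasDerivAt f 0 t) {x y : ℝ} (hx : x ∈ Set.Ioo p q)
    (hy : y ∈ Set.Ioo p q) : f x = f y :=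
  isOpen_Ioo.is_const_of_deriv_eq_zero isPreconnected_Ioo
    (fun t ht => (hf t ht).differentiableAt.differentiableWithinAt)
    (fun t ht => (hf t ht).deriv) hx hy

/-- A solution of the vanishing Schwarzian equation on an open interval is the fractional linear
map with the same 2-jet at `t₀`, and the denominator of that map does not vanish. -/
theorem eq_moebius_of_schwarzian_eq_zero {p q : ℝ} {φ u v w : ℝ → ℝ}
    (hφ : ∀ t ∈ Set.Ioo p q, HasDerivAt φ (u t) t)
    (hu : ∀ t ∈ Set.Ioo p q, HasDerivAt u (v t) t)
    (hv : ∀ t ∈ Set.Ioo p q, HasDerivAt v (w t) t)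
    (hu₀ : ∀ t ∈ Set.Ioo p q, u t ≠ 0)
    (hS : ∀ t ∈ Set.Ioo p q, 2 * w t * u t - 3 * v t ^ 2 = 0)
    {t₀ r : ℝ} (ht₀ : t₀ ∈ Set.Ioo p q) (hr : r = v t₀ / (2 * u t₀))
    {t : ℝ} (ht : t ∈ Set.Ioo p q) :
    1 - r * (t - t₀) ≠ 0 ∧ φ t = φ t₀ + u t₀ * (t - t₀) / (1 - r * (t - t₀)) := by
  have hlin : ∀ s, HasDerivAt (fun s => 1 - r * (s - t₀)) (-r) s := fun s => by
    simpa using (((hasDerivAt_id s).sub_const t₀).const_mul r).const_sub 1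
  -- The defect `E` of the equation `v (1 - r (s - t₀)) = 2 r u` satisfies `E ^ 2 / u ^ 3 = const`.
  have hE : ∀ s ∈ Set.Ioo p q, v s * (1 - r * (s - t₀)) - 2 * r * u s = 0 := by
    intro s hs
    have hconst : ∀ x ∈ Set.Ioo p q, HasDerivAt
        (fun x => (v x * (1 - r * (x - t₀)) - 2 * r * u x) ^ 2 / u x ^ 3) 0 x := by
      intro x hx
      have h := ((((hv x hx).mul (hlin x)).sub ((hu x hx).const_mul (2 * r))).pow 2).div
        ((hu x hx).pow 3) (pow_ne_zero 3 (hu₀ x hx))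
      refine h.congr_deriv ?_
      have hux := hu₀ x hx
      have hw : w x = 3 * v x ^ 2 / (2 * u x) := by
        field_simp
        linarith [hS x hx]
      simp only [Pi.sub_apply, Pi.mul_apply, Pi.pow_apply, hw]
      field_simp
      ring
    have h := eq_of_hasDerivAt_zero_Ioo hconst hs ht₀
    have h0 : v t₀ * (1 - r * (t₀ - t₀)) - 2 * r * u t₀ = 0 := by
      have := hu₀ t₀ ht₀
      rw [hr]
      field_simp
      ring
    simp only [h0] at h
    simpa [hu₀ s hs] using h
  have hsq : ∀ s ∈ Set.Ioo p q, u s * (1 - r * (s - t₀)) ^ 2 = u t₀ := by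
    intro s hs
    have hconst : ∀ x ∈ Set.Ioo p q,
        HasDerivAt (fun x => u x * (1 - r * (x - t₀)) ^ 2) 0 x := by
      intro x hx
      refine ((hu x hx).mul ((hlin x).pow 2)).congr_deriv ?_
      simp only [Pi.pow_apply]
      linear_combination (1 - r * (x - t₀)) * hE x hx
    simpa using eq_of_hasDerivAt_zero_Ioo hconst hs ht₀
  have hne : ∀ s ∈ Set.Ioo p q, 1 - r * (s - t₀) ≠ 0 := by
    intro s hs h
    have := hsq s hs
    rw [h] at this
    exact hu₀ t₀ ht₀ (by linarith)
  refine ⟨hne t ht, ?_⟩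
  have hconst : ∀ x ∈ Set.Ioo p q,
      HasDerivAt (fun x => φ x - u t₀ * (x - t₀) / (1 - r * (x - t₀))) 0 x := by
    intro x hx
    have h := (hφ x hx).sub
      ((((hasDerivAt_id x).sub_const t₀).const_mul (u t₀)).div (hlin x) (hne x hx))
    refine h.congr_deriv ?_
    have hx0 := hne x hx
    rw [sub_eq_zero, eq_div_iff (pow_ne_zero 2 hx0), hsq x hx]
    simp only [id]
    ring
  have h := eq_of_hasDerivAt_zero_Ioo hconst ht ht₀
  simp only [sub_self, mul_zero, zero_div, sub_zero] at h
  linarith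


/-- If `φ` is smooth on an open interval `I` with `φ'` nowhere zero and
`2·φ'''·φ' − 3·(φ'')² = 0` on `I`, then around each point of `I`, `φ` is a Möbius
transformation `t ↦ (a·t + c)/(b·t + d)` with `a·d − b·c ≠ 0`. -/
theorem schwarzian_zero_implies_moebius (p q : ℝ) (φ : ℝ → ℝ)
    (hφ : ContDiffOn ℝ (⊤ : ℕ∞) φ (Set.Ioo p q))
    (hφ' : ∀ t ∈ Set.Ioo p q, deriv φ t ≠ 0)
    (hS : ∀ t ∈ Set.Ioo p q,
      2 * deriv (deriv (deriv φ)) t * deriv φ t - 3 * (deriv (deriv φ) t) ^ 2 = 0) :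
    ∀ t₀ ∈ Set.Ioo p q, ∃ ε > 0, ∃ a b c d : ℝ, a * d - b * c ≠ 0 ∧
      ∀ t, |t - t₀| < ε → φ t = (a * t + c) / (b * t + d) := by
  have hsmooth : ∀ {f : ℝ → ℝ}, ContDiffOn ℝ (⊤ : ℕ∞) f (Set.Ioo p q) →
      ContDiffOn ℝ (⊤ : ℕ∞) (deriv f) (Set.Ioo p q) := fun hf =>
    hf.deriv_of_isOpen isOpen_Ioo (by simp)
  have hderiv : ∀ {f : ℝ → ℝ}, ContDiffOn ℝ (⊤ : ℕ∞) f (Set.Ioo p q) →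
      ∀ t ∈ Set.Ioo p q, HasDerivAt f (deriv f t) t := fun hf t ht =>
    ((hf.differentiableOn (by simp)).differentiableAt (isOpen_Ioo.mem_nhds ht)).hasDerivAt
  intro t₀ ht₀
  obtain ⟨ε, hε, hball⟩ := Metric.isOpen_iff.mp isOpen_Ioo t₀ ht₀
  obtain ⟨r, hr⟩ : ∃ r, r = deriv (deriv φ) t₀ / (2 * deriv φ t₀) := ⟨_, rfl⟩
  refine ⟨ε, hε, deriv φ t₀ - φ t₀ * r, -r, φ t₀ * (1 + r * t₀) - deriv φ t₀ * t₀, 1 + r * t₀,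
    ?_, fun t ht => ?_⟩
  · convert hφ' t₀ ht₀ using 1
    ring
  · obtain ⟨hne, h⟩ := eq_moebius_of_schwarzian_eq_zero (hderiv hφ) (hderiv (hsmooth hφ))
      (hderiv (hsmooth (hsmooth hφ))) hφ' hS ht₀ hr (hball (by simpa [Real.dist_eq] using ht))
    have hden : -r * t + (1 + r * t₀) = 1 - r * (t - t₀) := by ring
    rw [h, hden, eq_div_iff hne, add_mul, div_mul_cancel₀ _ hne]
    ring
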